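/- Let A and B be positive definite n×n complex matrices and s ∈ [0,1]. Then Tr A − Tr(B^s A^{1−s}) ≤ Tr((A−B)_+), where (A−B)_+ denotes the positive part of the self-adjoint matrix A−B. -/

import Mathlib

open scoped ComplexOrder

/-- Functional calculus for Hermitian matrices (junk value `0` off the Hermitian matrices). -/
noncomputable def cfcM {d : ℕ} (f : ℝ → ℝ) (A : Matrix (Fin d) (Fin d) ℂ) :
    Matrix (Fin d) (Fin d) ℂ :=
  if h : A.IsHermitian then
    (h.eigenvectorUnitary : Matrix (Fin d) (Fin d) ℂ) *
      Matrix.diagonal (fun i => (f (h.eigenvalues i) : ℂ)) *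
      (star (h.eigenvectorUnitary : Matrix (Fin d) (Fin d) ℂ))
  else 0

/-- Real power of a (positive) Hermitian matrix via functional calculus. -/
noncomputable def mpow {d : ℕ} (A : Matrix (Fin d) (Fin d) ℂ) (s : ℝ) :
    Matrix (Fin d) (Fin d) ℂ := cfcM (fun x => x ^ s) A

/-- Positive part of a Hermitian matrix via functional calculus. -/
noncomputable def posPartM {d : ℕ} (A : Matrix (Fin d) (Fin d) ℂ) :
    Matrix (Fin d) (Fin d) ℂ := cfcM (fun x => max x 0) A

open scoped MatrixOrder Matrix.Norms.L2Operator

lemma cfcM_eq_cfc {d : ℕ} (f : ℝ → ℝ) {A : Matrix (Fin d) (Fin d) ℂ} (hA : A.IsHermitian) :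
    cfcM f A = cfc f A := by
  rw [hA.cfc_eq, cfcM, dif_pos hA, Matrix.IsHermitian.cfc, Unitary.conjStarAlgAut_apply]
  rfl

lemma mpow_eq_rpow {d : ℕ} {A : Matrix (Fin d) (Fin d) ℂ} (hA : 0 ≤ A) (s : ℝ) :
    mpow A s = A ^ s := by
  rw [mpow, cfcM_eq_cfc _ (Matrix.nonneg_iff_posSemidef.mp hA).1, CFC.rpow_eq_cfc_real hA]

lemma trace_mul_nonneg_of_nonneg {d : ℕ} {X Y : Matrix (Fin d) (Fin d) ℂ}
    (hX : 0 ≤ X) (hY : 0 ≤ Y) : 0 ≤ ((X * Y).trace).re := by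
  obtain ⟨Z, rfl⟩ := CStarAlgebra.nonneg_iff_eq_star_mul_self.mp hY
  have h := (star_right_conjugate_nonneg hX Z)
  have h2 := (Matrix.nonneg_iff_posSemidef.mp h).trace_nonneg
  rw [← mul_assoc, Matrix.trace_mul_comm, ← mul_assoc]
  exact (Complex.le_def.mp h2).1

lemma rpow_mul_rpow_one_sub {d : ℕ} {X : Matrix (Fin d) (Fin d) ℂ} (hX : X.PosDef) (s : ℝ) :
    X ^ s * X ^ (1 - s) = X := by
  rw [← CFC.rpow_add hX.isUnit, add_sub_cancel, CFC.rpow_one X hX.posSemidef.nonneg]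

/-- For positive definite `A`, `B` on `ℂ^n` and `s ∈ [0,1]`:
`Tr A − Tr(B^s A^{1−s}) ≤ Tr((A−B)_+)`. -/
theorem trace_sub_trace_rpow_le_trace_posPart {n : ℕ}
    (A B : Matrix (Fin n) (Fin n) ℂ) (hA : A.PosDef) (hB : B.PosDef)
    (s : ℝ) (hs : s ∈ Set.Icc (0 : ℝ) 1) :
    (A.trace).re - ((mpow B s * mpow A (1 - s)).trace).re
      ≤ ((posPartM (A - B)).trace).re := by
  have hA0 : 0 ≤ A := hA.posSemidef.nonneg
  have hB0 : 0 ≤ B := hB.posSemidef.nonneg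
  have hH : (A - B).IsHermitian := hA.1.sub hB.1
  have hsa : IsSelfAdjoint (A - B) := hH
  rw [mpow_eq_rpow hB0, mpow_eq_rpow hA0, posPartM, cfcM_eq_cfc _ hH]
  set P := cfc (fun x : ℝ => max x 0) (A - B) with hP
  have hP0 : 0 ≤ P := cfc_nonneg fun x _ => le_max_right _ _
  have hP1 : A - B ≤ P := by
    conv_lhs => rw [← cfc_id ℝ (A - B)]
    exact cfc_mono fun x _ => le_max_left _ _
  have hs' : 1 - s ∈ Set.Icc (0 : ℝ) 1 := ⟨by linarith [hs.2], by linarith [hs.1]⟩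
  have hC : (B + P).PosDef := hB.add_posSemidef (Matrix.nonneg_iff_posSemidef.mp hP0)
  have hBC : B ≤ B + P := le_add_of_nonneg_right hP0
  have hAC : A ≤ B + P := by rwa [← sub_le_iff_le_add']
  have h1 := trace_mul_nonneg_of_nonneg (sub_nonneg.mpr (CFC.rpow_le_rpow hs hAC))
    (CFC.rpow_nonneg (a := A) (y := 1 - s))
  have h2 := trace_mul_nonneg_of_nonneg (sub_nonneg.mpr (CFC.rpow_le_rpow hs hBC))
    (sub_nonneg.mpr (CFC.rpow_le_rpow hs' hAC))
  have h3 := trace_mul_nonneg_of_nonneg (CFC.rpow_nonneg (a := B) (y := s))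
    (sub_nonneg.mpr (CFC.rpow_le_rpow hs' hBC))
  simp only [sub_mul, mul_sub, rpow_mul_rpow_one_sub hA, rpow_mul_rpow_one_sub hB,
    rpow_mul_rpow_one_sub hC, Matrix.trace_sub, Matrix.trace_add, Complex.sub_re,
    Complex.add_re] at h1 h2 h3
  linarith
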